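/- Fix α ∈ [0,1]. (1) If G₁ and G₂ are A_α-cospectral regular graphs and H is an arbitrary graph, then the R-edge joins G₁⟨e⟩H and G₂⟨e⟩H are A_α-cospectral. (2) If H₁ and H₂ are A_α-cospectral graphs with equal A_α-coronals Γ_{A_α(H₁)}(x) = Γ_{A_α(H₂)}(x), and G is a regular graph, then G⟨e⟩H₁ and G⟨e⟩H₂ are A_α-cospectral. -/

import Mathlib

open Matrix Polynomial
open scoped Classical

noncomputable section

/-- `A_α(G) = α·D(G) + (1-α)·A(G)`, where `D(G)` is the diagonal degree matrix and
`A(G)` the adjacency matrix. -/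
def Aalpha {V : Type*} [Fintype V] (G : SimpleGraph V) (α : ℝ) : Matrix V V ℝ :=
  α • Matrix.diagonal (fun v => (G.degree v : ℝ)) + (1 - α) • G.adjMatrix ℝ

/-- The `M`-coronal `Γ_M(x) = 1ᵀ (xI − M)⁻¹ 1`, i.e. the sum of the entries of
`(xI − M)⁻¹`. -/
def coronal {n : Type*} [Fintype n] (M : Matrix n n ℝ) (x : ℝ) : ℝ :=
  ∑ i, ∑ j, (x • (1 : Matrix n n ℝ) - M)⁻¹ i j

/-- The `R`-edge join `G₁⟨e⟩G₂`: take the `R`-graph `R(G₁)` (for each edge of `G₁` a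
new vertex joined to both of its endpoints) together with `G₂`, and join every inserted
vertex of `R(G₁)` with every vertex of `G₂`. -/
def rEdgeJoin {V₁ V₂ : Type*} (G₁ : SimpleGraph V₁) (G₂ : SimpleGraph V₂) :
    SimpleGraph (V₁ ⊕ (↥G₁.edgeSet ⊕ V₂)) :=
  SimpleGraph.fromRel fun a b =>
    match a, b with
    | Sum.inl v, Sum.inl w => G₁.Adj v w
    | Sum.inl v, Sum.inr (Sum.inl e) => v ∈ (e : Sym2 V₁)
    | Sum.inr (Sum.inl _), Sum.inr (Sum.inr _) => True
    | Sum.inr (Sum.inr u), Sum.inr (Sum.inr w) => G₂.Adj u w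
    | _, _ => False

/-!
Write `β = 1 - α`, `m = |E(G)|` and `u` for the indicator vector of the inserted vertices. Ordering
the vertices of `G⟨e⟩H` as those of the R-graph of `G` followed by those of `H`, the matrix
`A_α(G⟨e⟩H)` is `[[P, β u 1ᵀ], [β 1 uᵀ, αm I + A_α(H)]]`, where `P` depends on `H` only through its
order. If `(xI - P) z = u`, eliminating the first block gives
`φ(x) = φ_P(x) · det ((x - αm) I - A_α(H) - β² (uᵀz) 1 1ᵀ)`, and the matrix determinant lemma turns
the second factor into `φ_{A_α(H)}(x - αm) · (1 - β² (uᵀz) Γ_{A_α(H)}(x - αm))`. This settles the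
case of a varying `H`. When `G` is `r`-regular, `φ_P` is a rational substitution into `φ_{A_α(G)}`,
and `z` can be taken constant on edges and on vertices, so that `uᵀz` depends only on `x`, `α`, `m`,
`r` and `|V(H)|`; finally `φ_{A_α(G)}` determines `r` through the trace of `A_α(G)²`, and hence `m`.
-/

theorem polynomial_eq_of_eventually_eval_eq {R : Type*} [CommRing R] [IsDomain R] [LinearOrder R]
    [NoMaxOrder R] {p q : R[X]} (h : ∀ᶠ x in Filter.atTop, p.eval x = q.eval x) : p = q :=
  p.eq_of_infinite_eval_eq q <| Filter.frequently_cofinite_iff_infinite.mp <|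
    h.frequently.filter_mono Filter.atTop_le_cofinite

section Matrix

variable {m n R K : Type*} [Fintype m] [Fintype n] [DecidableEq m] [DecidableEq n]

section CommRing

variable [CommRing R]

theorem det_fromBlocks_mul₁₂ (A : Matrix m m R) (Z : Matrix m n R) (C : Matrix n m R)
    (D : Matrix n n R) : (fromBlocks A (A * Z) C D).det = A.det * (D - C * Z).det := by
  have hfactor : fromBlocks A (A * Z) C D =
      fromBlocks A 0 C (D - C * Z) * fromBlocks 1 Z 0 1 := by
    simp [fromBlocks_multiply]
  simp [hfactor]

-- `Z` stands for `(xI - A)⁻¹ B`; taking it as data allows `x` to be an eigenvalue of `A`.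
theorem eval_charpoly_fromBlocks {A : Matrix m m R} {B : Matrix m n R} {Z : Matrix m n R} {x : R}
    (h : (scalar m x - A) * Z = B) (C : Matrix n m R) (D : Matrix n n R) :
    (fromBlocks A B C D).charpoly.eval x =
      A.charpoly.eval x * (scalar n x - D - C * Z).det := by
  have hblocks : scalar (m ⊕ n) x - fromBlocks A B C D =
      fromBlocks (scalar m x - A) ((scalar m x - A) * -Z) (-C) (scalar n x - D) := by
    rw [Matrix.mul_neg, h]
    ext (i | i) (j | j) <;> simp [diagonal_apply]
  rw [eval_charpoly, hblocks, det_fromBlocks_mul₁₂, eval_charpoly, Matrix.mul_neg, Matrix.neg_mul,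
    neg_neg]

theorem card_eq_of_charpoly_eq [Nontrivial R] {M : Matrix m m R} {N : Matrix n n R}
    (h : M.charpoly = N.charpoly) : Fintype.card m = Fintype.card n := by
  simpa using congrArg natDegree h

-- `det (X²I - M²) = det (XI - M) * det (XI + M)`
theorem expand_two_charpoly_sq (M : Matrix n n R) :
    expand R 2 (M ^ 2).charpoly =
      (-1) ^ Fintype.card n * (M.charpoly * M.charpoly.comp (-X)) := by
  have hcomp : M.charpoly.comp (-X) = (-(scalar n X + C.mapMatrix M)).det := by
    rw [← coe_compRingHom_apply, charpoly, RingHom.map_det]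
    congr 1
    ext i j : 2
    by_cases hij : i = j <;> simp [hij, sub_eq_add_neg, add_comm]
  have hexpand : expand R 2 (M ^ 2).charpoly = (scalar n X ^ 2 - C.mapMatrix M ^ 2).det := by
    rw [← map_pow C.mapMatrix, ← map_pow (scalar n), charpoly, AlgHom.map_det]
    congr 1
    ext i j : 2
    by_cases hij : i = j <;> simp [hij]
  have hcomm : Commute (scalar n (X : R[X])) (C.mapMatrix M) :=
    scalar_commute _ (Commute.all _) _
  rw [hexpand, hcomp, hcomm.sq_sub_sq, mul_left_comm, ← det_neg, neg_neg, charpoly, charmatrix,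
    det_mul, mul_comm (det _)]

theorem trace_sq_eq_of_charpoly_eq {M : Matrix m m R} {N : Matrix n n R}
    (h : M.charpoly = N.charpoly) : (M ^ 2).trace = (N ^ 2).trace := by
  nontriviality R
  rw [trace_eq_neg_charpoly_nextCoeff, trace_eq_neg_charpoly_nextCoeff,
    expand_injective two_pos ((expand_two_charpoly_sq M).trans
      (by rw [h, card_eq_of_charpoly_eq h, expand_two_charpoly_sq N]))]

theorem det_add_vecMulVec {A : Matrix n n R} (hA : IsUnit A.det) (u v : n → R) :
    (A + vecMulVec u v).det = A.det * (1 + v ⬝ᵥ A⁻¹ *ᵥ u) := by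
  rw [vecMulVec_eq Unit, det_add_replicateCol_mul_replicateRow hA, det_unique (n := Unit),
    Matrix.mul_assoc, ← replicateCol_mulVec, Matrix.add_apply,
    replicateRow_mul_replicateCol_apply, one_apply_eq]

end CommRing

theorem det_scalar_sub_smul [Field K] (M : Matrix n n K) (u : K) {s : K} (hs : s ≠ 0) :
    (scalar n u - s • M).det = s ^ Fintype.card n * M.charpoly.eval (u / s) := by
  rw [eval_charpoly, ← det_smul, smul_sub, scalar_apply, scalar_apply, ← diagonal_smul]
  congr
  ext
  simp [mul_div_cancel₀ _ hs]

theorem det_scalar_sub_sub_smul_vecMulVec_one (M : Matrix n n ℝ) {x : ℝ}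
    (hx : M.charpoly.eval x ≠ 0) (θ : ℝ) :
    (scalar n x - M - θ • vecMulVec 1 1).det = M.charpoly.eval x * (1 - θ * coronal M x) := by
  rw [eval_charpoly] at hx ⊢
  have hcoronal : coronal M x = 1 ⬝ᵥ (scalar n x - M)⁻¹ *ᵥ 1 := by
    simp only [coronal, dotProduct, mulVec, Pi.one_apply, one_mul, mul_one, scalar_apply,
      ← smul_one_eq_diagonal]
    congr!
  rw [sub_eq_add_neg _ (θ • _), ← smul_vecMulVec, ← neg_vecMulVec, det_add_vecMulVec hx.isUnit,
    hcoronal, mulVec_neg, mulVec_smul, dotProduct_neg, dotProduct_smul, smul_eq_mul,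
    ← sub_eq_add_neg]

end Matrix

section Incidence

variable {V : Type*} (R : Type*) (G : SimpleGraph V)

/-- The `V × E(G)` incidence matrix of `G`: Mathlib's `SimpleGraph.incMatrix`, whose columns are
indexed by all unordered pairs, with only the columns of the edges kept. -/
def edgeIncMatrix [Zero R] [One R] : Matrix V G.edgeSet R :=
  (G.incMatrix R).submatrix id Subtype.val

theorem edgeIncMatrix_apply [Zero R] [One R] (v : V) (e : G.edgeSet) :
    edgeIncMatrix R G v e = if v ∈ (e : Sym2 V) then 1 else 0 := by
  simp [edgeIncMatrix, SimpleGraph.incMatrix_apply', SimpleGraph.incidenceSet]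

variable [Fintype V]

theorem sum_edgeSet_eq_sum_sym2 {M : Type*} [AddCommMonoid M] {f : Sym2 V → M}
    (hf : ∀ e ∉ G.edgeSet, f e = 0) : ∑ e : G.edgeSet, f e = ∑ e, f e :=
  Fintype.sum_of_injective Subtype.val Subtype.val_injective _ _ (by simpa using hf)
    fun _ => rfl

section NonAssocSemiring

variable [NonAssocSemiring R]

theorem adjMatrix_mulVec_one : G.adjMatrix R *ᵥ 1 = fun v => (G.degree v : R) := by
  ext v
  simp

theorem edgeIncMatrix_mulVec_one : edgeIncMatrix R G *ᵥ 1 = fun v => (G.degree v : R) := by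
  ext v
  rw [← SimpleGraph.sum_incMatrix_apply]
  simpa [mulVec, dotProduct, edgeIncMatrix] using
    sum_edgeSet_eq_sum_sym2 G (f := G.incMatrix R v) fun e he =>
      G.incMatrix_of_notMem_incidenceSet fun h => he h.1

theorem transpose_edgeIncMatrix_mulVec_one : (edgeIncMatrix R G)ᵀ *ᵥ 1 = 2 := by
  ext e
  simpa [mulVec, dotProduct, edgeIncMatrix] using G.sum_incMatrix_apply_of_mem_edgeSet (R := R) e.2

end NonAssocSemiring

theorem edgeIncMatrix_mul_transpose [Semiring R] :
    edgeIncMatrix R G * (edgeIncMatrix R G)ᵀ =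
      diagonal (fun v => (G.degree v : R)) + G.adjMatrix R := by
  have hsym2 : edgeIncMatrix R G * (edgeIncMatrix R G)ᵀ = G.incMatrix R * (G.incMatrix R)ᵀ := by
    ext v w
    exact sum_edgeSet_eq_sum_sym2 G (f := fun e => G.incMatrix R v e * G.incMatrix R w e)
      fun e he => by rw [G.incMatrix_of_notMem_incidenceSet fun h => he h.1, zero_mul]
  rw [hsym2, SimpleGraph.incMatrix_mul_transpose]
  ext v w
  by_cases hvw : v = w <;> simp [hvw, SimpleGraph.adjMatrix_apply]

end Incidence

section Join

variable {V W : Type*} (G : SimpleGraph V) (H : SimpleGraph W)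

/-- Regroups the vertices of `G⟨e⟩H` as those of the R-graph of `G`, inserted vertices first,
followed by those of `H`. -/
def rEdgeJoinEquiv : (G.edgeSet ⊕ V) ⊕ W ≃ V ⊕ (G.edgeSet ⊕ W) :=
  ((Equiv.sumComm G.edgeSet V).sumCongr (.refl W)).trans (.sumAssoc V G.edgeSet W)

/-- The indicator vector of the inserted vertices among the vertices of the R-graph of `G`. -/
def edgeIndicator : G.edgeSet ⊕ V → ℝ :=
  Sum.elim 1 0

theorem adjMatrix_rEdgeJoin_submatrix :
    ((rEdgeJoin G H).adjMatrix ℝ).submatrix (rEdgeJoinEquiv G) (rEdgeJoinEquiv G) =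
      fromBlocks (fromBlocks 0 (edgeIncMatrix ℝ G)ᵀ (edgeIncMatrix ℝ G) (G.adjMatrix ℝ))
        (vecMulVec (edgeIndicator G) 1) (vecMulVec 1 (edgeIndicator G)) (H.adjMatrix ℝ) := by
  have hG (v v') : (¬v = v' ∧ (G.Adj v v' ∨ G.Adj v' v)) ↔ G.Adj v v' := by
    grind [G.ne_of_adj, G.adj_comm]
  have hH (w w') : (¬w = w' ∧ (H.Adj w w' ∨ H.Adj w' w)) ↔ H.Adj w w' := by
    grind [H.ne_of_adj, H.adj_comm]
  ext ((e | v) | w) ((f | v') | w') <;>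
    simp [rEdgeJoinEquiv, rEdgeJoin, edgeIndicator, SimpleGraph.adjMatrix_apply,
      edgeIncMatrix_apply, hG, hH]

variable [Fintype V] [Fintype W]

theorem degree_rEdgeJoin :
    (fun a => ((rEdgeJoin G H).degree (rEdgeJoinEquiv G a) : ℝ)) =
      Sum.elim (Sum.elim (fun _ => 2 + (Fintype.card W : ℝ)) fun v => 2 * (G.degree v : ℝ))
        fun w => Fintype.card G.edgeSet + (H.degree w : ℝ) := by
  have hrow : (fun a => ((rEdgeJoin G H).degree (rEdgeJoinEquiv G a) : ℝ)) =
      ((rEdgeJoin G H).adjMatrix ℝ).submatrix (rEdgeJoinEquiv G) (rEdgeJoinEquiv G) *ᵥ 1 := by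
    rw [submatrix_mulVec_equiv]
    ext a
    simp [Pi.one_comp]
  rw [hrow, adjMatrix_rEdgeJoin_submatrix]
  simp only [fromBlocks_mulVec, Pi.one_comp, vecMulVec_mulVec,
    edgeIncMatrix_mulVec_one, transpose_edgeIncMatrix_mulVec_one, adjMatrix_mulVec_one]
  ext ((e | v) | w) <;> simp [edgeIndicator, dotProduct, two_mul]

/-- The principal block of `A_α(G⟨e⟩H)` on the vertices of the R-graph of `G`, inserted vertices
first. It depends on `H` only through the order `k` of `H`, and differs from `A_α` of the R-graph by
the `α * k` that joining with `H` adds to the diagonal entry of each inserted vertex. -/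
def rGraphBlock (α : ℝ) (k : ℕ) : Matrix (G.edgeSet ⊕ V) (G.edgeSet ⊕ V) ℝ :=
  fromBlocks (scalar _ (α * (2 + k))) ((1 - α) • (edgeIncMatrix ℝ G)ᵀ)
    ((1 - α) • edgeIncMatrix ℝ G) (Aalpha G α + α • diagonal fun v => (G.degree v : ℝ))

theorem Aalpha_rEdgeJoin_submatrix (α : ℝ) :
    (Aalpha (rEdgeJoin G H) α).submatrix (rEdgeJoinEquiv G) (rEdgeJoinEquiv G) =
      fromBlocks (rGraphBlock G α (Fintype.card W)) ((1 - α) • vecMulVec (edgeIndicator G) 1)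
        ((1 - α) • vecMulVec 1 (edgeIndicator G))
        (scalar W (α * Fintype.card G.edgeSet) + Aalpha H α) := by
  have hsplit : (Aalpha (rEdgeJoin G H) α).submatrix (rEdgeJoinEquiv G) (rEdgeJoinEquiv G) =
      α • diagonal (fun a => ((rEdgeJoin G H).degree (rEdgeJoinEquiv G a) : ℝ)) +
        (1 - α) •
          ((rEdgeJoin G H).adjMatrix ℝ).submatrix (rEdgeJoinEquiv G) (rEdgeJoinEquiv G) := by
    ext a b
    simp [Aalpha, diagonal_apply]
  rw [hsplit, degree_rEdgeJoin, adjMatrix_rEdgeJoin_submatrix]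
  ext ((e | v) | w) ((f | v') | w') <;>
    simp [rGraphBlock, Aalpha, edgeIndicator, diagonal_apply, two_mul, mul_add, ite_add_zero,
      add_assoc, add_comm, add_left_comm]

theorem eval_charpoly_Aalpha_rEdgeJoin (α : ℝ) {x : ℝ} {z : G.edgeSet ⊕ V → ℝ}
    (hz : (scalar _ x - rGraphBlock G α (Fintype.card W)) *ᵥ z = edgeIndicator G) :
    (Aalpha (rEdgeJoin G H) α).charpoly.eval x =
      (rGraphBlock G α (Fintype.card W)).charpoly.eval x *
        (scalar W (x - α * Fintype.card G.edgeSet) - Aalpha H α -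
          ((1 - α) ^ 2 * (edgeIndicator G ⬝ᵥ z)) • vecMulVec 1 1).det := by
  have hcol : (scalar _ x - rGraphBlock G α (Fintype.card W)) * ((1 - α) • vecMulVec z 1) =
      (1 - α) • vecMulVec (edgeIndicator G) (1 : W → ℝ) := by
    rw [Matrix.mul_smul, mul_vecMulVec, hz]
  have hcharpoly := charpoly_reindex (rEdgeJoinEquiv (W := W) G).symm (Aalpha (rEdgeJoin G H) α)
  rw [reindex_apply, Equiv.symm_symm, Aalpha_rEdgeJoin_submatrix] at hcharpoly
  rw [← hcharpoly, eval_charpoly_fromBlocks hcol]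
  congr 2
  rw [Matrix.smul_mul, Matrix.mul_smul, vecMulVec_mul_vecMulVec, map_sub, vecMulVec_smul,
    smul_smul, smul_smul, sub_add_eq_sub_sub, sq]

theorem charpoly_Aalpha_rEdgeJoin_eq_of_coronal_eq {W₁ W₂ : Type*} [Fintype W₁]
    [Fintype W₂] {α : ℝ} {H₁ : SimpleGraph W₁} {H₂ : SimpleGraph W₂}
    (hcharpoly : (Aalpha H₁ α).charpoly = (Aalpha H₂ α).charpoly)
    (hcoronal : ∀ x, coronal (Aalpha H₁ α) x = coronal (Aalpha H₂ α) x) :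
    (Aalpha (rEdgeJoin G H₁) α).charpoly = (Aalpha (rEdgeJoin G H₂) α).charpoly := by
  have hcard : Fintype.card W₁ = Fintype.card W₂ := card_eq_of_charpoly_eq hcharpoly
  set Q := rGraphBlock G α (Fintype.card W₂)
  set c := α * (Fintype.card G.edgeSet : ℝ) with hc
  have hQ := Q.charpoly.eventually_atTop_not_isRoot Q.charpoly_monic.ne_zero
  have hH := (Filter.tendsto_atTop_add_const_right .atTop (-c) Filter.tendsto_id).eventually <|
    (Aalpha H₂ α).charpoly.eventually_atTop_not_isRoot (Aalpha H₂ α).charpoly_monic.ne_zero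
  refine polynomial_eq_of_eventually_eval_eq ?_
  filter_upwards [hQ, hH] with x hxQ hxH
  have hz : (scalar _ x - Q) *ᵥ ((scalar _ x - Q)⁻¹ *ᵥ edgeIndicator G) = edgeIndicator G := by
    rw [IsRoot, eval_charpoly] at hxQ
    rw [mulVec_mulVec, mul_nonsing_inv _ (Ne.isUnit hxQ), one_mulVec]
  have hxH' : (Aalpha H₂ α).charpoly.eval (x - c) ≠ 0 := hxH
  rw [eval_charpoly_Aalpha_rEdgeJoin G H₁ α (by rw [hcard]; exact hz),
    eval_charpoly_Aalpha_rEdgeJoin G H₂ α hz, hcard, ← hc,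
    det_scalar_sub_sub_smul_vecMulVec_one _ (hcharpoly ▸ hxH'),
    det_scalar_sub_sub_smul_vecMulVec_one _ hxH', hcharpoly, hcoronal]

end Join

section Regular

variable {V V' : Type*} [Fintype V] [Fintype V'] {G : SimpleGraph V} {G' : SimpleGraph V'} {r : ℕ}

theorem Aalpha_mulVec_one (G : SimpleGraph V) (α : ℝ) :
    Aalpha G α *ᵥ 1 = fun v => (G.degree v : ℝ) := by
  ext v
  simp [Aalpha, add_mulVec, smul_mulVec, adjMatrix_mulVec_one, mulVec_diagonal, sub_mul]

theorem diagonal_degree_of_regular (hG : G.IsRegularOfDegree r) :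
    diagonal (fun v => (G.degree v : ℝ)) = (r : ℝ) • 1 := by
  rw [smul_one_eq_diagonal]
  congr with v
  exact_mod_cast hG v

theorem trace_Aalpha_sq (hG : G.IsRegularOfDegree r) (α : ℝ) :
    (Aalpha G α ^ 2).trace = Fintype.card V * (α ^ 2 * r ^ 2 + (1 - α) ^ 2 * r) := by
  have hdegree (v : V) : (G.degree v : ℝ) = r := by exact_mod_cast hG v
  have hadj : (G.adjMatrix ℝ * G.adjMatrix ℝ).trace = Fintype.card V * r := by
    simp only [trace, diag_apply, SimpleGraph.adjMatrix_mul_self_apply_self, hdegree,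
      Finset.sum_const, Finset.card_univ, nsmul_eq_mul]
  rw [Aalpha, diagonal_degree_of_regular hG]
  simp only [sq, add_mul, mul_add, trace_add, trace_smul, Matrix.smul_mul, Matrix.mul_smul,
    Matrix.one_mul, Matrix.mul_one, hadj, SimpleGraph.trace_adjMatrix, trace_one, smul_eq_mul]
  ring

theorem isRegularOfDegree_of_charpoly_Aalpha_eq {r' : ℕ} {α : ℝ} (hG : G.IsRegularOfDegree r)
    (hG' : G'.IsRegularOfDegree r')
    (h : (Aalpha G α).charpoly = (Aalpha G' α).charpoly) : G'.IsRegularOfDegree r := by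
  intro v
  have hcard : Fintype.card V = Fintype.card V' := card_eq_of_charpoly_eq h
  have hpos : (Fintype.card V' : ℝ) ≠ 0 := by
    exact_mod_cast (Fintype.card_pos_iff.mpr ⟨v⟩).ne'
  have htrace := trace_sq_eq_of_charpoly_eq h
  rw [trace_Aalpha_sq hG, trace_Aalpha_sq hG', hcard] at htrace
  have hfactor : ((r : ℝ) - r') * (α ^ 2 * (r + r') + (1 - α) ^ 2) = 0 := by
    linear_combination mul_left_cancel₀ hpos htrace
  have hr : (r : ℝ) = r' := by
    rcases mul_eq_zero.mp hfactor with hr | hzero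
    · exact sub_eq_zero.mp hr
    · obtain ⟨hsum, hsq⟩ :=
        (add_eq_zero_iff_of_nonneg (by positivity) (sq_nonneg _)).mp hzero
      obtain rfl : α = 1 := (sub_eq_zero.mp (sq_eq_zero_iff.mp hsq)).symm
      linarith [r.cast_nonneg (α := ℝ), r'.cast_nonneg (α := ℝ)]
  rw [hG' v, Nat.cast_inj.mp hr]

theorem card_mul_degree_eq_two_mul_card_edgeSet (hG : G.IsRegularOfDegree r) :
    Fintype.card V * r = 2 * Fintype.card G.edgeSet := by
  rw [← SimpleGraph.edgeFinset_card, ← SimpleGraph.sum_degrees_eq_twice_card_edges,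
    Finset.sum_congr rfl fun v _ => hG v, Finset.sum_const, Finset.card_univ, smul_eq_mul]

theorem card_edgeSet_eq_of_regular (hG : G.IsRegularOfDegree r) (hG' : G'.IsRegularOfDegree r)
    (hcard : Fintype.card V = Fintype.card V') :
    Fintype.card G.edgeSet = Fintype.card G'.edgeSet := by
  have hedges := card_mul_degree_eq_two_mul_card_edgeSet hG
  have hedges' := card_mul_degree_eq_two_mul_card_edgeSet hG'
  rw [hcard] at hedges
  omega

theorem eval_charpoly_rGraphBlock (hG : G.IsRegularOfDegree r) (α : ℝ) (k : ℕ) {x c : ℝ}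
    (hc : x - α * (2 + k) = c) (hc₀ : c ≠ 0) :
    (rGraphBlock G α k).charpoly.eval x =
      c ^ Fintype.card G.edgeSet *
        (scalar V (x - α * r + (1 - α) * (2 * α - 1) * r / c) -
          (1 + (1 - α) / c) • Aalpha G α).det := by
  have hscalar : scalar G.edgeSet x - scalar _ (α * (2 + k)) = scalar _ c := by
    rw [← map_sub, hc]
  have hcol : (scalar G.edgeSet x - scalar _ (α * (2 + k))) *
      (((1 - α) / c) • (edgeIncMatrix ℝ G)ᵀ) = (1 - α) • (edgeIncMatrix ℝ G)ᵀ := by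
    rw [hscalar, Matrix.mul_smul, scalar_apply, ← smul_one_eq_diagonal, Matrix.smul_mul,
      Matrix.one_mul, smul_smul, div_mul_cancel₀ _ hc₀]
  rw [rGraphBlock, eval_charpoly_fromBlocks hcol, eval_charpoly, hscalar, scalar_apply,
    det_diagonal, Finset.prod_const, Finset.card_univ, Matrix.smul_mul, Matrix.mul_smul,
    edgeIncMatrix_mul_transpose]
  congr 2
  rw [Aalpha, diagonal_degree_of_regular hG]
  simp only [scalar_apply, ← smul_one_eq_diagonal]
  module

theorem charpoly_rGraphBlock_eq_of_regular {α : ℝ} (hG : G.IsRegularOfDegree r)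
    (hG' : G'.IsRegularOfDegree r) (h : (Aalpha G α).charpoly = (Aalpha G' α).charpoly) (k : ℕ) :
    (rGraphBlock G α k).charpoly = (rGraphBlock G' α k).charpoly := by
  have hcard : Fintype.card V = Fintype.card V' := card_eq_of_charpoly_eq h
  have hedges := card_edgeSet_eq_of_regular hG hG' hcard
  refine polynomial_eq_of_eventually_eval_eq ?_
  filter_upwards [Filter.eventually_ne_atTop (α * (2 + k)),
    Filter.eventually_ne_atTop (α * (2 + k) - (1 - α))] with x hx hx'
  obtain ⟨c, hc⟩ : ∃ c, x - α * (2 + k) = c := ⟨_, rfl⟩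
  have hc₀ : c ≠ 0 := hc ▸ sub_ne_zero.mpr hx
  have hs : 1 + (1 - α) / c ≠ 0 := by
    rw [one_add_div hc₀]
    refine div_ne_zero (fun h₀ => hx' ?_) hc₀
    linarith
  rw [eval_charpoly_rGraphBlock hG α k hc hc₀, eval_charpoly_rGraphBlock hG' α k hc hc₀,
    det_scalar_sub_smul _ _ hs, det_scalar_sub_smul _ _ hs, h, hcard, hedges]

theorem scalar_sub_rGraphBlock_mulVec_eq_edgeIndicator (hG : G.IsRegularOfDegree r) {α x a b : ℝ}
    {k : ℕ} (hedge : (x - α * (2 + k)) * b - 2 * (1 - α) * a = 1)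
    (hvertex : (x - r - α * r) * a - (1 - α) * r * b = 0) :
    (scalar _ x - rGraphBlock G α k) *ᵥ Sum.elim (b • 1) (a • 1) = edgeIndicator G := by
  have hdegree : (fun v => (G.degree v : ℝ)) = (r : ℝ) • 1 := by
    ext v
    simp [hG v]
  rw [rGraphBlock, sub_mulVec, fromBlocks_mulVec, diagonal_degree_of_regular hG]
  simp only [Sum.elim_comp_inl, Sum.elim_comp_inr, add_mulVec, smul_mulVec, mulVec_smul,
    Aalpha_mulVec_one, edgeIncMatrix_mulVec_one, transpose_edgeIncMatrix_mulVec_one, one_mulVec,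
    hdegree, scalar_apply, diagonal_const_mulVec]
  ext (e | v)
  · simp only [edgeIndicator, Pi.sub_apply, Pi.add_apply, Pi.smul_apply, Pi.ofNat_apply,
      Sum.elim_inl, smul_eq_mul]
    linear_combination hedge
  · simp only [edgeIndicator, Pi.sub_apply, Pi.add_apply, Pi.smul_apply, Pi.one_apply,
      Pi.zero_apply, Sum.elim_inr, smul_eq_mul]
    linear_combination hvertex

theorem edgeIndicator_dotProduct (G : SimpleGraph V) (a b : ℝ) :
    edgeIndicator G ⬝ᵥ Sum.elim (b • 1) (a • 1) = Fintype.card G.edgeSet * b := by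
  simp [edgeIndicator, dotProduct]

-- The unknowns are the values on vertices and on edges of a solution `z` of `(xI - P) z = u`.
theorem eventually_exists_quotient_solution (α r k : ℝ) :
    ∀ᶠ x in Filter.atTop, ∃ a b : ℝ,
      (x - α * (2 + k)) * b - 2 * (1 - α) * a = 1 ∧ (x - r - α * r) * a - (1 - α) * r * b = 0 := by
  have hlinear (p : ℝ) : Filter.Tendsto (fun x => x - p) .atTop .atTop :=
    Filter.tendsto_atTop_add_const_right _ (-p) Filter.tendsto_id
  have hdet := ((hlinear (α * (2 + k))).atTop_mul_atTop₀ (hlinear (r + α * r))).eventually_ne_atTop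
    (2 * (1 - α) ^ 2 * r)
  filter_upwards [hdet] with x hx
  set Δ := (x - α * (2 + k)) * (x - (r + α * r)) - 2 * (1 - α) ^ 2 * r with hΔ
  have hΔ₀ : Δ ≠ 0 := sub_ne_zero.mpr hx
  refine ⟨(1 - α) * r / Δ, (x - (r + α * r)) / Δ, ?_, by ring⟩
  field_simp
  rw [hΔ]
  ring

theorem charpoly_Aalpha_rEdgeJoin_eq_of_regular {W : Type*} [Fintype W] {r' : ℕ} {α : ℝ}
    (hG : G.IsRegularOfDegree r) (hG' : G'.IsRegularOfDegree r')
    (h : (Aalpha G α).charpoly = (Aalpha G' α).charpoly) (H : SimpleGraph W) :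
    (Aalpha (rEdgeJoin G H) α).charpoly = (Aalpha (rEdgeJoin G' H) α).charpoly := by
  replace hG' := isRegularOfDegree_of_charpoly_Aalpha_eq hG hG' h
  have hedges := card_edgeSet_eq_of_regular hG hG' (card_eq_of_charpoly_eq h)
  refine polynomial_eq_of_eventually_eval_eq ?_
  filter_upwards [eventually_exists_quotient_solution α r (Fintype.card W)]
    with x ⟨a, b, hedge, hvertex⟩
  have hz := scalar_sub_rGraphBlock_mulVec_eq_edgeIndicator hG hedge hvertex
  have hz' := scalar_sub_rGraphBlock_mulVec_eq_edgeIndicator hG' hedge hvertex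
  rw [eval_charpoly_Aalpha_rEdgeJoin G H α hz, eval_charpoly_Aalpha_rEdgeJoin G' H α hz',
    edgeIndicator_dotProduct, edgeIndicator_dotProduct, hedges,
    charpoly_rGraphBlock_eq_of_regular hG hG' h]

end Regular

theorem Aalpha_cospectral_rEdgeJoin_general (α : ℝ) :
    (∀ {V₁ V₂ W : Type*} [Fintype V₁] [Fintype V₂] [Fintype W] {r₁ r₂ : ℕ} {G₁ : SimpleGraph V₁}
        {G₂ : SimpleGraph V₂} (H : SimpleGraph W),
      G₁.IsRegularOfDegree r₁ → G₂.IsRegularOfDegree r₂ →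
      (Aalpha G₁ α).charpoly = (Aalpha G₂ α).charpoly →
      (Aalpha (rEdgeJoin G₁ H) α).charpoly = (Aalpha (rEdgeJoin G₂ H) α).charpoly) ∧
    (∀ {V W₁ W₂ : Type*} [Fintype V] [Fintype W₁] [Fintype W₂] (G : SimpleGraph V)
        {H₁ : SimpleGraph W₁} {H₂ : SimpleGraph W₂},
      (Aalpha H₁ α).charpoly = (Aalpha H₂ α).charpoly →
      (∀ x, coronal (Aalpha H₁ α) x = coronal (Aalpha H₂ α) x) →
      (Aalpha (rEdgeJoin G H₁) α).charpoly = (Aalpha (rEdgeJoin G H₂) α).charpoly) :=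
  ⟨fun H hG₁ hG₂ h => charpoly_Aalpha_rEdgeJoin_eq_of_regular hG₁ hG₂ h H,
    fun G _ _ => charpoly_Aalpha_rEdgeJoin_eq_of_coronal_eq G⟩

/-- Corollary: constructions of `A_α`-cospectral pairs from `R`-edge joins.
(1) Joining two `A_α`-cospectral regular graphs with the same arbitrary graph `H` gives
`A_α`-cospectral graphs.  (2) Joining a regular graph `G` with two `A_α`-cospectral
graphs having equal `A_α`-coronals gives `A_α`-cospectral graphs. -/
theorem Aalpha_cospectral_rEdgeJoin
    (α : ℝ) (hα : α ∈ Set.Icc (0 : ℝ) 1) :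
    (∀ (n₁ n₂ k r₁ r₂ : ℕ) (G₁ : SimpleGraph (Fin n₁)) (G₂ : SimpleGraph (Fin n₂))
        (H : SimpleGraph (Fin k)),
      G₁.IsRegularOfDegree r₁ → G₂.IsRegularOfDegree r₂ →
      (Aalpha G₁ α).charpoly = (Aalpha G₂ α).charpoly →
      (Aalpha (rEdgeJoin G₁ H) α).charpoly =
        (Aalpha (rEdgeJoin G₂ H) α).charpoly) ∧
    (∀ (n k₁ k₂ r : ℕ) (G : SimpleGraph (Fin n)) (H₁ : SimpleGraph (Fin k₁))
        (H₂ : SimpleGraph (Fin k₂)),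
      G.IsRegularOfDegree r →
      (Aalpha H₁ α).charpoly = (Aalpha H₂ α).charpoly →
      (∀ x : ℝ, coronal (Aalpha H₁ α) x = coronal (Aalpha H₂ α) x) →
      (Aalpha (rEdgeJoin G H₁) α).charpoly =
        (Aalpha (rEdgeJoin G H₂) α).charpoly) := by
  have hgeneral := Aalpha_cospectral_rEdgeJoin_general.{0, 0, 0, 0, 0, 0} α
  exact ⟨fun _ _ _ _ _ _ _ H hG₁ hG₂ h => by convert hgeneral.1 H hG₁ hG₂ (by convert h),
    fun _ _ _ _ G _ _ _ h hcoronal => by convert hgeneral.2 G (by convert h) hcoronal⟩
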